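/- Let F = {f₁,…,fₙ} ⊂ ℂ[x₁,…,xₙ] be a polynomial system with an isolated singular zero p ∈ ℂⁿ, and assume rank(J(f₁,…,f_s)(p)) = rank(J(F)(p)) = s. For new variables α = (α₁,…,α_s), define h_j = α₁ ∂f₁/∂x_j + ⋯ + α_s ∂f_s/∂x_j + ∂f_{s+1}/∂x_j for j = 1,…,n, let G = {f₁,…,fₙ, h₁,…,hₙ} ⊂ ℂ[x,α], and let α̂ ∈ ℂ^s be the unique point with G(p,α̂) = 0. Then the multiplicity of (p,α̂) as an isolated zero of G = 0 in ℂ^{n+s} is strictly smaller than the multiplicity of p as an isolated zero of F = 0 in ℂⁿ. -/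

import Mathlib

open MvPolynomial

/-- The rank over ℂ of the Jacobian matrix of a finite polynomial system, evaluated at `p`. -/
noncomputable def jacRank {n : ℕ} {ι : Type*} [Fintype ι]
    (g : ι → MvPolynomial (Fin n) ℂ) (p : Fin n → ℂ) : ℕ :=
  (Matrix.of fun (i : ι) (j : Fin n) => eval p (pderiv j (g i))).rank

/-- The image in `ℂ[x]/⟨H⟩` of the maximal ideal `⟨x₁ − p₁,…,xₙ − pₙ⟩` of the point `p`. -/
noncomputable def maxIdealAt {n : ℕ} (H : Set (MvPolynomial (Fin n) ℂ)) (p : Fin n → ℂ) :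
    Ideal (MvPolynomial (Fin n) ℂ ⧸ Ideal.span H) :=
  Ideal.map (Ideal.Quotient.mk (Ideal.span H))
    (Ideal.span (Set.range fun i : Fin n => X i - C (p i)))

open Classical in
/-- The multiplicity of `p` as a zero of the polynomial system `H`: the ℂ-vector-space
dimension of the localization of `ℂ[x₁,…,xₙ]/⟨H⟩` at the maximal ideal
`⟨x₁ − p₁,…,xₙ − pₙ⟩` (and `0` in the degenerate case where this ideal is not prime,
which cannot happen when `p` is an isolated zero of `H`). -/
noncomputable def zeroMultiplicity {n : ℕ} (H : Set (MvPolynomial (Fin n) ℂ))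
    (p : Fin n → ℂ) : ℕ :=
  if h : (maxIdealAt H p).IsPrime then
    haveI := h
    Module.finrank ℂ (Localization.AtPrime (maxIdealAt H p))
  else 0


/-- The polynomial `fᵢ ∈ ℂ[x₁,…,xₙ]` viewed inside `ℂ[x₁,…,xₙ,α₁,…,α_s]`, the variables
`x₁,…,xₙ` being the first `n` variables. -/
noncomputable def embX {n : ℕ} (s : ℕ) (g : MvPolynomial (Fin n) ℂ) :
    MvPolynomial (Fin (n + s)) ℂ :=
  rename (Fin.castAdd s) g

/-- The auxiliary polynomial
`h_j = α₁ ∂f₁/∂x_j + ⋯ + α_s ∂f_s/∂x_j + ∂f_{s+1}/∂x_j ∈ ℂ[x,α]`,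
where `α_i` is the `(n+i)`-th variable of `ℂ[x₁,…,xₙ,α₁,…,α_s]`. -/
noncomputable def hPoly {n s : ℕ} (hs : s < n) (f : Fin n → MvPolynomial (Fin n) ℂ)
    (j : Fin n) : MvPolynomial (Fin (n + s)) ℂ :=
  (∑ i : Fin s, X (Fin.natAdd n i) * embX s (pderiv j (f (Fin.castLE hs.le i)))) +
    embX s (pderiv j (f ⟨s, hs⟩))

/-!
As `p` is isolated, its ideal is minimal over `⟨F⟩`: Noether normalization and the continuity of
roots show that every positive-dimensional component through `p` has zeros accumulating at `p`.
Hence the local ring of `F` at `p` is finite-dimensional. As the Jacobian matrix of `f₁,…,f_s` has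
rank `s` at `p`, Cramer's rule solves `h = 0` for `α` over this local ring, so the local ring of `G`
is a quotient of it.

Were it not a proper quotient, some `b` with `b_{s+1}` a unit would satisfy `∑ᵢ bᵢ ∂fᵢ/∂x_j = 0` for
every `j` in the local ring of `F`. The `n - 1` equations `fᵢ = 0`, `i ≠ s + 1`, vanish on a curve
through `p`, and so on a formal arc `φ`, along which `f_{s+1}` becomes a nonzero power series `γ`
without constant term. By the chain rule `γ` divides the derivative of `∑ᵢ φ(bᵢ fᵢ) = φ(b_{s+1}) γ`,
hence `γ` divides `γ'`, which is impossible in characteristic zero.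
-/

open scoped Matrix

universe u v

section Points

variable {k R C : Type*} [Field k] [CommRing R] [Algebra k R] [CommRing C] [Algebra k C]

theorem ker_isMaximal_of_algHom (c : R →ₐ[k] k) : (RingHom.ker c).IsMaximal :=
  RingHom.ker_isMaximal_of_surjective c (Function.RightInverse.surjective c.commutes)

theorem sub_algebraMap_mem_ker (c : R →ₐ[k] k) (r : R) :
    r - algebraMap k R (c r) ∈ RingHom.ker c := by
  simp [RingHom.mem_ker]

theorem algHom_eq_of_ker_le {c c' : R →ₐ[k] k} (h : RingHom.ker c ≤ RingHom.ker c') : c' = c := by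
  ext r
  have hr := h (sub_algebraMap_mem_ker c r)
  rwa [RingHom.mem_ker, map_sub, AlgHom.commutes, sub_eq_zero] at hr

theorem exists_algHom_comp_eq_of_isIntegral [IsAlgClosed k] {j : R →ₐ[k] C}
    (hinj : Function.Injective j) (hint : j.toRingHom.IsIntegral) (c : R →ₐ[k] k) :
    ∃ c' : C →ₐ[k] k, c'.comp j = c := by
  let _ := j.toRingHom.toAlgebra
  have : Algebra.IsIntegral R C := ⟨hint⟩
  have := ker_isMaximal_of_algHom c
  obtain ⟨Q, hQ, hcomap⟩ := Ideal.exists_ideal_over_maximal_of_isIntegral (S := C) (RingHom.ker c)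
    (((RingHom.injective_iff_ker_eq_bot _).1 hinj).trans_le bot_le)
  have hker : RingHom.ker c = RingHom.ker ((Ideal.Quotient.mkₐ k Q).comp j) := by
    ext r
    rw [← hcomap, RingHom.mem_ker, AlgHom.comp_apply, Ideal.Quotient.mkₐ_eq_mk,
      Ideal.Quotient.eq_zero_iff_mem]
    rfl
  have hfactor : (Ideal.Quotient.mk Q).comp j.toRingHom =
      (algebraMap k (C ⧸ Q)).comp (c : R →+* k) := by
    ext r
    have hr := hker.le (sub_algebraMap_mem_ker c r)
    rw [RingHom.mem_ker, map_sub, AlgHom.commutes, sub_eq_zero] at hr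
    exact hr
  let _ := Ideal.Quotient.field Q
  have : Algebra.IsIntegral k (C ⧸ Q) := ⟨RingHom.IsIntegral.tower_top (c : R →+* k) _
    (hfactor ▸ hint.trans _ _ (RingHom.isIntegral_of_surjective _ Ideal.Quotient.mk_surjective))⟩
  let residue : k ≃ₐ[k] C ⧸ Q := AlgEquiv.ofBijective (Algebra.ofId k (C ⧸ Q))
    IsAlgClosed.algebraMap_bijective_of_isIntegral
  refine ⟨residue.symm.toAlgHom.comp (Ideal.Quotient.mkₐ k Q), algHom_eq_of_ker_le fun r hr => ?_⟩
  have hr' := RingHom.mem_ker.1 (hker.le hr)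
  rw [RingHom.mem_ker, AlgHom.comp_assoc, AlgHom.comp_apply, hr', map_zero]

end Points

section NearbyPoints

open Filter Topology

theorem pow_card_le_nnnorm_prod {K : Type*} [NormedField K] {b : NNReal} {s : Multiset K}
    (h : ∀ x ∈ s, b ≤ ‖x‖₊) : b ^ Multiset.card s ≤ ‖s.prod‖₊ := by
  have hprod := Multiset.pow_card_le_prod (s := s.map nnnormHom) (a := b) (by simpa using h)
  rwa [Multiset.card_map, ← map_multiset_prod] at hprod

theorem exists_isRoot_norm_pow_natDegree_le {K : Type*} [NormedField K] {ν : Polynomial K}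
    (hsplits : ν.Splits) (hν : ν.Monic) (hdeg : ν.natDegree ≠ 0) :
    ∃ z, ν.IsRoot z ∧ ‖z‖ ^ ν.natDegree ≤ ‖ν.coeff 0‖ := by
  classical
  have hcard : Multiset.card ν.roots = ν.natDegree := hsplits.natDegree_eq_card_roots.symm
  have hne : ν.roots.toFinset.Nonempty := by
    rw [Multiset.toFinset_nonempty, ← Multiset.card_pos, hcard]
    exact hdeg.bot_lt
  obtain ⟨z, hz, hmin⟩ := ν.roots.toFinset.exists_min_image (‖·‖₊) hne
  refine ⟨z, Polynomial.isRoot_of_mem_roots (Multiset.mem_toFinset.1 hz), ?_⟩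
  have hcoeff : ‖ν.coeff 0‖ = ‖ν.roots.prod‖ := by
    simp [hsplits.coeff_zero_eq_prod_roots_of_monic hν]
  rw [hcoeff, ← hcard]
  exact_mod_cast pow_card_le_nnnorm_prod fun x hx => hmin x (Multiset.mem_toFinset.2 hx)

theorem norm_le_one_add_sum_norm_coeff_of_isRoot {K : Type*} [NormedField K] {ν : Polynomial K}
    (hν : ν.Monic) {z : K} (hz : ν.IsRoot z) :
    ‖z‖ ≤ 1 + ∑ j ∈ Finset.range ν.natDegree, ‖ν.coeff j‖ := by
  have hcauchy : ν.cauchyBound ≤ 1 + ∑ j ∈ Finset.range ν.natDegree, ‖ν.coeff j‖₊ := by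
    rw [Polynomial.cauchyBound, hν.leadingCoeff, nnnorm_one, div_one, add_comm]
    gcongr
    exact Finset.sup_le fun j hj =>
      Finset.single_le_sum (f := (‖ν.coeff ·‖₊)) (fun _ _ => zero_le) hj
  have hbound := NNReal.coe_le_coe.2 ((hz.norm_lt_cauchyBound hν.ne_zero).le.trans hcauchy)
  simpa using hbound

theorem exists_separating_element {S R k : Type*} [CommRing S] [CommRing R] [Field k]
    [Algebra k R] [Algebra S R] [Module.Finite S R] (c : R →ₐ[k] k) :
    ∃ e, c e = 0 ∧ ∀ c' : R →ₐ[k] k,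
      (∀ x, c' (algebraMap S R x) = c (algebraMap S R x)) → c' e = 0 → c' = c := by
  let T : Set (Ideal R) := {Q | ∃ c' : R →ₐ[k] k, c' ≠ c ∧
    (∀ x, c' (algebraMap S R x) = c (algebraMap S R x)) ∧ RingHom.ker c' = Q}
  have hT : T.Finite := by
    refine (Algebra.QuasiFinite.finite_primesOver ((RingHom.ker c).under S)).subset ?_
    rintro _ ⟨c', -, hc', rfl⟩
    refine ⟨RingHom.ker_isPrime c', ⟨?_⟩⟩
    ext x
    simp only [Ideal.under, Ideal.mem_comap, RingHom.mem_ker, hc']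
  have havoid : ¬ (RingHom.ker c : Set R) ⊆ ⋃ Q ∈ T, (Q : Set R) := by
    rw [Ideal.subset_union_prime_finite hT ⊥ ⊥
      fun _ ⟨c', _, _, hker⟩ _ _ => hker ▸ RingHom.ker_isPrime c']
    rintro ⟨_, ⟨c', hne, -, rfl⟩, hle⟩
    exact hne (algHom_eq_of_ker_le hle)
  obtain ⟨e, he, hT_e⟩ := Set.not_subset.1 havoid
  refine ⟨e, he, fun c' hc' hc'e => by_contra fun hne => hT_e ?_⟩
  exact Set.mem_biUnion (⟨c', hne, hc', rfl⟩ : RingHom.ker c' ∈ T) hc'e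

/- The constant term of the specialized minimal polynomial is a product of roots, so the smallest
root is small with it; that root is the value of `e` at some point over `π`. -/
theorem exists_algHom_norm_pow_le {k S R : Type*} [NormedField k] [IsAlgClosed k]
    [CommRing S] [IsDomain S] [IsIntegrallyClosed S] [Algebra k S]
    [CommRing R] [IsDomain R] [Algebra k R] [Algebra S R] [IsScalarTower k S R]
    [Module.IsTorsionFree S R] [Algebra.IsIntegral S R] (π : S →ₐ[k] k) (e : R) :
    ∃ c : R →ₐ[k] k, (∀ x, c (algebraMap S R x) = π x) ∧
      ‖c e‖ ^ (minpoly S e).natDegree ≤ ‖π ((minpoly S e).coeff 0)‖ := by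
  have he : IsIntegral S e := Algebra.IsIntegral.isIntegral e
  have hμ : (minpoly S e).Monic := minpoly.monic he
  have hdeg := hμ.natDegree_map (π : S →+* k)
  obtain ⟨z, hz, hz_norm⟩ := exists_isRoot_norm_pow_natDegree_le (IsAlgClosed.splits _)
    (hμ.map (π : S →+* k)) (hdeg ▸ (minpoly.natDegree_pos he).ne')
  rw [hdeg, Polynomial.coeff_map] at hz_norm
  let evalRoot : AdjoinRoot (minpoly S e) →ₐ[k] k :=
    AdjoinRoot.liftAlgHom _ π z ((Polynomial.eval_map (π : S →+* k) z).symm.trans hz)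
  let incl : AdjoinRoot (minpoly S e) →ₐ[S] R :=
    (Algebra.adjoin S {e}).val.comp (AdjoinRoot.Minpoly.toAdjoin S e)
  have hincl : Function.Injective (incl.restrictScalars k) :=
    Subtype.val_injective.comp (minpoly.ToAdjoin.injective he)
  have hint : (incl.restrictScalars k).toRingHom.IsIntegral := by
    refine RingHom.IsIntegral.tower_top (algebraMap S _) _ ?_
    rw [show (incl.restrictScalars k).toRingHom.comp (algebraMap S _) = algebraMap S R from
      incl.comp_algebraMap]
    exact algebraMap_isIntegral_iff.2 inferInstance
  obtain ⟨c, hc⟩ := exists_algHom_comp_eq_of_isIntegral hincl hint evalRoot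
  have hc_incl : ∀ g, c (incl (AdjoinRoot.mk _ g)) = Polynomial.eval₂ (π : S →+* k) z g := fun g =>
    (DFunLike.congr_fun hc (AdjoinRoot.mk _ g)).trans (AdjoinRoot.liftAlgHom_mk ..)
  refine ⟨c, fun x => ?_, ?_⟩
  · rw [← incl.commutes]
    exact (hc_incl (Polynomial.C x)).trans (Polynomial.eval₂_C ..)
  · have hincl_root : incl (AdjoinRoot.mk _ Polynomial.X) = e :=
      AdjoinRoot.Minpoly.coe_toAdjoin_mk_X
    have hce : c e = z := by rw [← hincl_root, hc_incl, Polynomial.eval₂_X]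
    rwa [hce]

theorem norm_apply_le_of_monic_aeval_eq_zero {k S R : Type*} [NormedField k] [CommRing S]
    [CommRing R] [Algebra S R] (c : R →+* k) {μ : Polynomial S} (hμ : μ.Monic) {r : R}
    (hr : Polynomial.aeval r μ = 0) :
    ‖c r‖ ≤ 1 + ∑ j ∈ Finset.range μ.natDegree, ‖c (algebraMap S R (μ.coeff j))‖ := by
  have hroot : (μ.map (c.comp (algebraMap S R))).IsRoot (c r) := by
    rw [Polynomial.IsRoot, Polynomial.eval_map, ← Polynomial.hom_eval₂, ← Polynomial.aeval_def, hr,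
      map_zero]
  simpa [hμ.natDegree_map] using norm_le_one_add_sum_norm_coeff_of_isRoot (hμ.map _) hroot

theorem exists_tendsto_algHom_of_bounded {k R : Type*} [NormedField k] [ProperSpace k] [CommRing R]
    [Algebra k R] (U : Ultrafilter (R →ₐ[k] k)) (hU : ∀ r, ∃ B, ∀ᶠ c : R →ₐ[k] k in U, ‖c r‖ ≤ B) :
    ∃ c₀ : R →ₐ[k] k, ∀ r, Tendsto (fun c : R →ₐ[k] k => c r) U (𝓝 (c₀ r)) := by
  have hlim : ∀ r, ∃ z, Tendsto (fun c : R →ₐ[k] k => c r) U (𝓝 z) := fun r => by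
    obtain ⟨B, hB⟩ := hU r
    obtain ⟨z, -, hz⟩ := (isCompact_closedBall (0 : k) B).ultrafilter_le_nhds (U.map fun c => c r)
      (le_principal_iff.2 (hB.mono fun c hc => mem_closedBall_zero_iff.2 hc))
    exact ⟨z, hz⟩
  choose l hl using hlim
  have hl_eq : ∀ {r z}, Tendsto (fun c : R →ₐ[k] k => c r) U (𝓝 z) → l r = z :=
    tendsto_nhds_unique (hl _)
  exact ⟨
    { toFun := l
      map_one' := hl_eq (by simp)
      map_zero' := hl_eq (by simp)
      map_mul' := fun x y => hl_eq (by simpa using (hl x).mul (hl y))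
      map_add' := fun x y => hl_eq (by simpa using (hl x).add (hl y))
      commutes' := fun a => hl_eq (by simp) }, hl⟩

theorem tendsto_algHom_of_separating {k S R : Type*} [NormedField k] [ProperSpace k] [CommRing S]
    [CommRing R] [Algebra k R] [Algebra S R] [Algebra.IsIntegral S R] {c : R →ₐ[k] k} {e : R}
    (hsep : ∀ c' : R →ₐ[k] k,
      (∀ x, c' (algebraMap S R x) = c (algebraMap S R x)) → c' e = 0 → c' = c)
    {U : Ultrafilter (R →ₐ[k] k)}
    (hS : ∀ x, Tendsto (fun c' : R →ₐ[k] k => c' (algebraMap S R x)) U (𝓝 (c (algebraMap S R x))))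
    (he : Tendsto (fun c' : R →ₐ[k] k => c' e) U (𝓝 0)) (r : R) :
    Tendsto (fun c' : R →ₐ[k] k => c' r) U (𝓝 (c r)) := by
  have hbounded : ∀ r, ∃ B, ∀ᶠ c' : R →ₐ[k] k in U, ‖c' r‖ ≤ B := fun r => by
    obtain ⟨μ, hμ, hμr⟩ := Algebra.IsIntegral.isIntegral (R := S) r
    obtain ⟨B, hB⟩ := ((tendsto_finsetSum (Finset.range μ.natDegree)
      fun j _ => (hS (μ.coeff j)).norm).const_add 1).isBoundedUnder_le
    refine ⟨B, (eventually_map.1 hB).mono fun c' hc' => ?_⟩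
    exact (norm_apply_le_of_monic_aeval_eq_zero (c' : R →+* k) hμ hμr).trans hc'
  obtain ⟨c₀, hc₀⟩ := exists_tendsto_algHom_of_bounded U hbounded
  rw [← hsep c₀ (fun x => tendsto_nhds_unique (hc₀ _) (hS x)) (tendsto_nhds_unique (hc₀ e) he)]
  exact hc₀ r

theorem isField_of_isIntegral_mvPolynomial_of_isEmpty {σ k R : Type*} [IsEmpty σ] [Field k]
    [CommRing R] [IsDomain R] [Algebra (MvPolynomial σ k) R]
    [Algebra.IsIntegral (MvPolynomial σ k) R] : IsField R :=
  isField_of_isIntegral_of_isField'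
    ((isEmptyAlgEquiv k σ).toMulEquiv.isField (Field.toIsField k))

theorem exists_nearby_algHoms_of_finite {σ R : Type*} [Nonempty σ] [CommRing R] [IsDomain R]
    [Algebra ℂ R] [Algebra (MvPolynomial σ ℂ) R]
    [IsScalarTower ℂ (MvPolynomial σ ℂ) R] [Module.Finite (MvPolynomial σ ℂ) R]
    [Module.IsTorsionFree (MvPolynomial σ ℂ) R] (c : R →ₐ[ℂ] ℂ) :
    ∃ F : Filter (R →ₐ[ℂ] ℂ), F.NeBot ∧ (∀ᶠ c' in F, c' ≠ c) ∧
      ∀ r, Tendsto (fun c' : R →ₐ[ℂ] ℂ => c' r) F (𝓝 (c r)) := by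
  obtain ⟨e, hce, hsep⟩ := exists_separating_element (S := MvPolynomial σ ℂ) c
  obtain ⟨q, hq⟩ : ∃ q : σ → ℂ, ∀ x, aeval q x = c (algebraMap _ R x) :=
    ⟨_, DFunLike.congr_fun (aeval_unique (c.comp (IsScalarTower.toAlgHom ℂ _ R))).symm⟩
  choose lift hlift hlift_e using fun y : σ → ℂ => exists_algHom_norm_pow_le (aeval y) e
  have : (𝓝[≠] q).NeBot := Module.punctured_nhds_neBot ℂ _ q
  let U := Ultrafilter.of (𝓝[≠] q)
  have hU : (U : Filter (σ → ℂ)) ≤ 𝓝[≠] q := Ultrafilter.of_le _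
  have heval : ∀ x : MvPolynomial σ ℂ,
      Tendsto (fun y => aeval y x) U (𝓝 (c (algebraMap _ R x))) := fun x => by
    rw [← hq]
    exact ((MvPolynomial.continuous_eval x).tendsto q).mono_left (hU.trans nhdsWithin_le_nhds)
  have hcoeff : c (algebraMap _ R ((minpoly (MvPolynomial σ ℂ) e).coeff 0)) = 0 := by
    have hroot := congrArg c (minpoly.aeval (MvPolynomial σ ℂ) e)
    rwa [map_zero, ← AlgHom.coe_toRingHom, Polynomial.aeval_def, Polynomial.hom_eval₂,
      AlgHom.coe_toRingHom, hce, Polynomial.eval₂_at_zero] at hroot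
  refine ⟨U.map lift, inferInstance, ?_, tendsto_algHom_of_separating
    (e := e ^ (minpoly (MvPolynomial σ ℂ) e).natDegree)
    (fun c' hc' he => hsep c' hc' (eq_zero_of_pow_eq_zero (map_pow c' e _ ▸ he))) ?_ ?_⟩
  · refine eventually_map.2 ((eventually_mem_nhdsWithin.filter_mono hU).mono fun y hy hyc => hy ?_)
    have hq_eq : aeval q = (aeval y : MvPolynomial σ ℂ →ₐ[ℂ] ℂ) :=
      AlgHom.ext fun x => by rw [← hlift y, hyc, hq]
    exact funext fun i => by simpa using (DFunLike.congr_fun hq_eq (X i)).symm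
  · exact fun x => tendsto_map'_iff.2 ((heval x).congr fun y => (hlift y x).symm)
  · refine tendsto_map'_iff.2 (squeeze_zero_norm (fun y => ?_) (tendsto_zero_iff_norm_tendsto_zero.1
      (hcoeff ▸ heval ((minpoly _ e).coeff 0))))
    simpa using hlift_e y

theorem exists_nearby_algHoms {R : Type*} [CommRing R] [IsDomain R] [Algebra ℂ R]
    [Algebra.FiniteType ℂ R] {c : R →ₐ[ℂ] ℂ} (hc : RingHom.ker c ≠ ⊥) :
    ∃ F : Filter (R →ₐ[ℂ] ℂ), F.NeBot ∧ (∀ᶠ c' in F, c' ≠ c) ∧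
      ∀ r, Tendsto (fun c' : R →ₐ[ℂ] ℂ => c' r) F (𝓝 (c r)) := by
  obtain ⟨d, g, hg_inj, hg_fin⟩ := exists_finite_inj_algHom_of_fg ℂ R
  let _ := g.toRingHom.toAlgebra
  have : IsScalarTower ℂ (MvPolynomial (Fin d) ℂ) R := .of_algHom g
  have : Module.Finite (MvPolynomial (Fin d) ℂ) R := hg_fin
  have := Module.isTorsionFree_iff_algebraMap_injective.2 hg_inj
  have : Nonempty (Fin d) := by
    by_contra hd
    have := not_nonempty_iff.1 hd
    let _ := (isField_of_isIntegral_mvPolynomial_of_isEmpty (σ := Fin d) (k := ℂ) (R := R)).toField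
    exact hc ((RingHom.injective_iff_ker_eq_bot _).1 (c : R →+* ℂ).injective)
  exact exists_nearby_algHoms_of_finite (σ := Fin d) c

theorem vanishingIdeal_mem_minimalPrimes_of_isolated {σ : Type*} [Finite σ]
    {F : Set (MvPolynomial σ ℂ)} {p : σ → ℂ} (hp : ∀ g ∈ F, eval p g = 0)
    (hiso : ∀ᶠ y in 𝓝 p, (∀ g ∈ F, eval y g = 0) → y = p) :
    vanishingIdeal ℂ {p} ∈ (Ideal.span F).minimalPrimes := by
  refine ⟨⟨inferInstance, Ideal.span_le.2 fun g hg => ?_⟩, fun P ⟨hP, hFP⟩ hPp => ?_⟩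
  · exact (mem_vanishingIdeal_singleton_iff p g).2 (hp g hg)
  by_contra hlt
  let c : MvPolynomial σ ℂ ⧸ P →ₐ[ℂ] ℂ := Ideal.Quotient.liftₐ P (aeval p) fun g hg =>
    (mem_vanishingIdeal_singleton_iff p g).1 (hPp hg)
  have hc : RingHom.ker c ≠ ⊥ := fun hker => hlt fun g hg => by
    have hg' : Ideal.Quotient.mk P g ∈ RingHom.ker c := (mem_vanishingIdeal_singleton_iff p g).1 hg
    rwa [hker, Ideal.mem_bot, Ideal.Quotient.eq_zero_iff_mem] at hg'
  obtain ⟨F', hF', hne, hlim⟩ := exists_nearby_algHoms hc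
  let point (c' : MvPolynomial σ ℂ ⧸ P →ₐ[ℂ] ℂ) (i : σ) : ℂ := c' (Ideal.Quotient.mk P (X i))
  have hpoint : ∀ c' g, c' (Ideal.Quotient.mk P g) = eval (point c') g := fun c' =>
    DFunLike.congr_fun (aeval_unique (c'.comp (Ideal.Quotient.mkₐ ℂ P)))
  have hpoint_lim : Tendsto point F' (𝓝 p) := tendsto_pi_nhds.2 fun i => by
    simpa [c] using hlim (Ideal.Quotient.mk P (X i))
  obtain ⟨c', hc', hc'_iso⟩ := (hne.and (hpoint_lim.eventually hiso)).exists
  refine hc' (AlgHom.ext fun r => ?_)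
  obtain ⟨g, rfl⟩ := Ideal.Quotient.mk_surjective r
  rw [hpoint, hc'_iso fun g hg => ?_]
  · rfl
  · rw [← hpoint, Ideal.Quotient.eq_zero_iff_mem.2 (hFP (Ideal.subset_span hg)), map_zero]

end NearbyPoints

section TaylorExpansion

variable {k V : Type*} [Field k] [CommRing V] [Algebra k V]

theorem exists_linearMap_eq_algebraMap_add_mul {c : V →ₐ[k] k} {w : V} (hw : IsLeftRegular w)
    (hker : RingHom.ker c = Ideal.span {w}) :
    ∃ D : V →ₗ[k] V, ∀ v, v = algebraMap k V (c v) + w * D v := by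
  let mulW := LinearEquiv.ofInjective (LinearMap.mulLeft k w) hw
  have hmem : ∀ v, (LinearMap.id - Algebra.linearMap k V ∘ₗ c.toLinearMap : V →ₗ[k] V) v ∈
      LinearMap.range (LinearMap.mulLeft k w) := fun v => by
    obtain ⟨v', hv'⟩ := Ideal.mem_span_singleton.1 (hker ▸ sub_algebraMap_mem_ker c v)
    exact ⟨v', hv'.symm⟩
  refine ⟨mulW.symm.toLinearMap ∘ₗ LinearMap.codRestrict _ _ hmem, fun v => ?_⟩
  have hmulW := congrArg Subtype.val (mulW.apply_symm_apply (LinearMap.codRestrict _ _ hmem v))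
  exact eq_add_of_sub_eq' hmulW.symm

theorem apply_pow_mul_eq_sum_antidiagonal {c : V →ₐ[k] k} {D : V →ₗ[k] V}
    (hD : ∀ u v, D (u * v) = c u • D v + D u * v) (n : ℕ) (u v : V) :
    c ((D ^ n) (u * v)) =
      ∑ x ∈ Finset.HasAntidiagonal.antidiagonal n, c ((D ^ x.1) u) * c ((D ^ x.2) v) := by
  induction n generalizing u v with
  | zero => simp
  | succ n ih =>
    rw [Finset.Nat.sum_antidiagonal_succ, pow_succ, Module.End.mul_apply, hD, map_add, map_smul,
      map_add, map_smul, ih]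
    simp [pow_succ]

/- Iterating `v = c v + w * D v` gives `v = c v + c (D v) * w + c (D² v) * w² + ⋯`. -/
theorem exists_algHom_powerSeries {c : V →ₐ[k] k} {w : V} (hw : IsLeftRegular w)
    (hker : RingHom.ker c = Ideal.span {w}) :
    ∃ φ : V →ₐ[k] PowerSeries k,
      (∀ v, PowerSeries.constantCoeff (φ v) = c v) ∧ PowerSeries.coeff 1 (φ w) = 1 := by
  obtain ⟨D, hD⟩ := exists_linearMap_eq_algebraMap_add_mul hw hker
  have hcw : c w = 0 := RingHom.mem_ker.1 (hker ▸ Ideal.mem_span_singleton_self w)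
  have hD_eq : ∀ {v a v'}, v = algebraMap k V a + w * v' → D v = v' := by
    rintro _ a v' rfl
    have h := hD (algebraMap k V a + w * v')
    rw [map_add c, AlgHom.commutes, map_mul c, hcw, zero_mul, add_zero] at h
    exact (hw (add_left_cancel h)).symm
  have hD_one : D 1 = 0 := hD_eq (a := 1) (by simp)
  have hD_w : D w = 1 := hD_eq (a := 0) (by simp)
  have hD_mul : ∀ u v, D (u * v) = c u • D v + D u * v := fun u v => hD_eq (a := c u * c v) (by
    rw [Algebra.smul_def, map_mul]
    linear_combination v * hD u + algebraMap k V (c u) * hD v)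
  let expansion : V →ₗ[k] PowerSeries k :=
    { toFun := fun v => PowerSeries.mk fun n => c ((D ^ n) v)
      map_add' := fun u v => by ext; simp
      map_smul' := fun a v => by ext; simp }
  refine ⟨AlgHom.ofLinearMap expansion ?_ ?_, fun v => ?_, ?_⟩
  · ext n
    rcases n with _ | n <;> simp [expansion, pow_succ, hD_one, PowerSeries.coeff_one]
  · intro u v
    ext n
    simp [expansion, PowerSeries.coeff_mul, apply_pow_mul_eq_sum_antidiagonal hD_mul]
  · simp [expansion]
  · simp [expansion, hD_w]

end TaylorExpansion

section FormalArcs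

theorem eq_maximalIdeal_of_isPrime_of_ne_bot {C : Type*} [CommRing C] {Q : Ideal C} [Q.IsPrime]
    (hQ : ∀ P : Ideal C, P.IsPrime → P < Q → P = ⊥)
    {P : Ideal (Localization.AtPrime Q)} (hP : P.IsPrime) (hne : P ≠ ⊥) :
    P = IsLocalRing.maximalIdeal (Localization.AtPrime Q) := by
  have hle : P.under C ≤ Q :=
    (Ideal.comap_mono (IsLocalRing.le_maximalIdeal hP.ne_top)).trans_eq
      (IsLocalization.AtPrime.under_maximalIdeal (Localization.AtPrime Q) Q)
  have hunder : P.under C = Q := by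
    refine hle.eq_of_not_lt fun hlt => hne ?_
    rw [← IsLocalization.map_under Q.primeCompl _ P, hQ (P.under C) (Ideal.comap_isPrime _ _) hlt,
      Ideal.map_bot]
  rw [← IsLocalization.map_under Q.primeCompl _ P, hunder, Localization.AtPrime.map_eq_maximalIdeal]

theorem exists_injective_algHom_powerSeries_of_isIntegrallyClosed {k C : Type*} [Field k]
    [CommRing C] [IsDomain C] [IsNoetherianRing C] [IsIntegrallyClosed C] [Algebra k C]
    {c : C →ₐ[k] k} (hne : RingHom.ker c ≠ ⊥)
    (hmin : ∀ P : Ideal C, P.IsPrime → P < RingHom.ker c → P = ⊥) :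
    ∃ φ : C →ₐ[k] PowerSeries k,
      Function.Injective φ ∧ ∀ x, PowerSeries.constantCoeff (φ x) = c x := by
  have hQ : (RingHom.ker c).IsPrime := RingHom.ker_isPrime c
  have hnzd := (RingHom.ker c).primeCompl_le_nonZeroDivisors
  let V := Localization.AtPrime (RingHom.ker c)
  have hVnoeth : IsNoetherianRing V :=
    IsLocalization.isNoetherianRing (RingHom.ker c).primeCompl V inferInstance
  have hVdom : IsDomain V := IsLocalization.isDomain_localization hnzd
  have hVclosed : IsIntegrallyClosed V := isIntegrallyClosed_of_isLocalization _ _ hnzd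
  have hVprimes := fun P (h : P ≠ ⊥) hP => eq_maximalIdeal_of_isPrime_of_ne_bot hmin (P := P) hP h
  have hinj : Function.Injective (algebraMap C V) := IsLocalization.injective V hnzd
  have hprincipal : (IsLocalRing.maximalIdeal V).IsPrincipal :=
    ((tfae_of_isNoetherianRing_of_isLocalRing_of_isDomain V).out 3 4 :
      (IsIntegrallyClosed V ∧ ∀ P : Ideal V, P ≠ ⊥ → P.IsPrime → P = IsLocalRing.maximalIdeal V) ↔
        (IsLocalRing.maximalIdeal V).IsPrincipal).1 ⟨hVclosed, hVprimes⟩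
  obtain ⟨w, hw⟩ := hprincipal.principal
  let cV : V →ₐ[k] k := IsLocalization.liftAlgHom (M := (RingHom.ker c).primeCompl) (f := c)
    fun y => isUnit_iff_ne_zero.2 y.2
  have hkerV : RingHom.ker cV = Ideal.span {w} :=
    (IsLocalRing.eq_maximalIdeal (ker_isMaximal_of_algHom cV)).trans hw
  have hw0 : w ≠ 0 := by
    rintro rfl
    refine hne ((Ideal.map_eq_bot_iff_of_injective hinj).1 ?_)
    rw [Localization.AtPrime.map_eq_maximalIdeal, hw, Submodule.span_zero_singleton]
  obtain ⟨φ, hφ, hφw⟩ := exists_algHom_powerSeries (mul_right_injective₀ hw0) hkerV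
  have hkerφ : RingHom.ker φ = ⊥ := by
    by_contra h
    have hwφ : w ∈ RingHom.ker φ := by
      rw [hVprimes _ h (RingHom.ker_isPrime φ), hw]
      exact Submodule.mem_span_singleton_self w
    simp [RingHom.mem_ker.1 hwφ] at hφw
  refine ⟨φ.comp (IsScalarTower.toAlgHom k C V),
    ((RingHom.injective_iff_ker_eq_bot _).2 hkerφ).comp hinj, fun x => ?_⟩
  simp [hφ, cV]

theorem exists_isIntegrallyClosed_injective_algHom {k : Type v} {R : Type u} [Field k] [CharZero k]
    [CommRing R] [IsDomain R] [Algebra k R] [Algebra.FiniteType k R] :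
    ∃ (C : Type u) (_ : CommRing C) (_ : Algebra k C) (j : R →ₐ[k] C), IsDomain C ∧
      IsNoetherianRing C ∧ IsIntegrallyClosed C ∧
      Function.Injective j ∧ j.toRingHom.IsIntegral := by
  obtain ⟨d, g, hg, hgfin⟩ := exists_finite_inj_algHom_of_fg k R
  let S := MvPolynomial (Fin d) k
  let _ : Algebra S R := g.toRingHom.toAlgebra
  have : IsScalarTower k S R := IsScalarTower.of_algebraMap_eq fun x => (g.commutes x).symm
  have : Module.Finite S R := hgfin
  have : FaithfulSMul S R := (faithfulSMul_iff_algebraMap_injective S R).2 hg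
  let K := FractionRing R
  let L := FractionRing S
  let _ : Algebra L K := FractionRing.liftAlgebra S K
  have : FiniteDimensional L K := .of_isLocalization S R (nonZeroDivisors S)
  have hint : ∀ x : R, IsIntegral S (algebraMap R K x) := fun x =>
    (Algebra.IsIntegral.isIntegral x).map (IsScalarTower.toAlgHom S R K)
  let j : R →ₐ[S] integralClosure S K := (IsScalarTower.toAlgHom S R K).codRestrict _ hint
  have : IsIntegrallyClosed (integralClosure S K) :=
    integralClosure.isIntegrallyClosedOfFiniteExtension L
  refine ⟨integralClosure S K, inferInstance, inferInstance, j.restrictScalars k, inferInstance,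
    integralClosure.isNoetherianRing (K := L) K, this, ?_, ?_⟩
  · exact fun x y h => IsFractionRing.injective R K (congrArg Subtype.val h)
  · exact RingHom.IsIntegral.tower_top (algebraMap S R) _
      (j.comp_algebraMap ▸ algebraMap_isIntegral_iff.2 inferInstance)

theorem exists_injective_algHom_powerSeries {k : Type v} {R : Type u} [Field k] [CharZero k]
    [IsAlgClosed k] [CommRing R] [IsDomain R] [Algebra k R] [Algebra.FiniteType k R] {c : R →ₐ[k] k}
    (hne : RingHom.ker c ≠ ⊥) (hmin : ∀ P : Ideal R, P.IsPrime → P < RingHom.ker c → P = ⊥) :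
    ∃ φ : R →ₐ[k] PowerSeries k,
      Function.Injective φ ∧ ∀ x, PowerSeries.constantCoeff (φ x) = c x := by
  obtain ⟨C, _, _, j, _, _, _, hj, hint⟩ := exists_isIntegrallyClosed_injective_algHom (k := k)
    (R := R)
  obtain ⟨c', rfl⟩ := exists_algHom_comp_eq_of_isIntegral hj hint c
  have hmax := ker_isMaximal_of_algHom (c'.comp j)
  let _ := j.toRingHom.toAlgebra
  have : Algebra.IsIntegral R C := ⟨hint⟩
  have hne' : RingHom.ker c' ≠ ⊥ := by
    intro h
    refine hne ((Submodule.eq_bot_iff _).2 fun r hr => ?_)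
    have hr' : j r ∈ RingHom.ker c' := hr
    rwa [h, Ideal.mem_bot, map_eq_zero_iff j hj] at hr'
  have hmin' : ∀ P : Ideal C, P.IsPrime → P < RingHom.ker c' → P = ⊥ := by
    intro P hP hlt
    by_contra hP0
    have hcomap : P.comap (algebraMap R C) = RingHom.ker (c'.comp j) := by
      by_contra h
      exact hP0 (Ideal.eq_bot_of_comap_eq_bot (hmin _ (Ideal.comap_isPrime _ _)
        (lt_of_le_of_ne (Ideal.comap_mono hlt.le) h)))
    have hPmax : P.IsMaximal :=
      Ideal.isMaximal_of_isIntegral_of_isMaximal_comap P (hcomap ▸ hmax)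
    exact hlt.ne (hPmax.eq_of_le (RingHom.ker_isPrime c').ne_top hlt.le)
  obtain ⟨φ, hφ, hφc⟩ := exists_injective_algHom_powerSeries_of_isIntegrallyClosed hne' hmin'
  exact ⟨φ.comp j, hφ.comp hj, fun x => hφc (j x)⟩

theorem exists_algHom_powerSeries_of_lt_vanishingIdeal {k σ : Type*} [Field k] [CharZero k]
    [IsAlgClosed k] [Finite σ] {P : Ideal (MvPolynomial σ k)} (hP : P.IsPrime) {p : σ → k}
    (hlt : P < vanishingIdeal k {p}) :
    ∃ φ : MvPolynomial σ k →ₐ[k] PowerSeries k, P ≤ RingHom.ker φ ∧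
      RingHom.ker φ < vanishingIdeal k {p} ∧ ∀ g, PowerSeries.constantCoeff (φ g) = eval p g := by
  -- A prime `P'` maximal among those strictly below the point defines a curve through `p`.
  obtain ⟨P', ⟨_, hPP', hP'lt⟩, hmax⟩ := set_has_maximal_iff_noetherian.2
    (inferInstance : IsNoetherian (MvPolynomial σ k) (MvPolynomial σ k))
    {P' : Ideal _ | P'.IsPrime ∧ P ≤ P' ∧ P' < vanishingIdeal k {p}} ⟨P, hP, le_rfl, hlt⟩
  have hker : ∀ g, g ∈ vanishingIdeal k {p} ↔ aeval p g = 0 := by simp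
  let c : MvPolynomial σ k ⧸ P' →ₐ[k] k :=
    Ideal.Quotient.liftₐ P' (aeval p) fun g hg => (hker g).1 (hP'lt.le hg)
  have hcomap : (RingHom.ker c).comap (Ideal.Quotient.mk P') = vanishingIdeal k {p} := by
    ext g
    exact (hker g).symm
  have hbot : (⊥ : Ideal (MvPolynomial σ k ⧸ P')).comap (Ideal.Quotient.mk P') = P' := Ideal.mk_ker
  let comapMk := Ideal.orderEmbeddingOfSurjective (Ideal.Quotient.mk P')
    Ideal.Quotient.mk_surjective
  have hmin : ∀ Q : Ideal (MvPolynomial σ k ⧸ P'), Q.IsPrime → Q < RingHom.ker c → Q = ⊥ := by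
    intro Q hQ hQlt
    by_contra hQ0
    have hP'Q : P' < Q.comap (Ideal.Quotient.mk P') :=
      hbot.symm.trans_lt (comapMk.strictMono (bot_lt_iff_ne_bot.2 hQ0))
    exact hmax _ ⟨Ideal.comap_isPrime _ _, hPP'.trans hP'Q.le,
      hcomap ▸ comapMk.strictMono hQlt⟩ hP'Q
  obtain ⟨φ, hφ, hφc⟩ := exists_injective_algHom_powerSeries (c := c)
    (fun h => hP'lt.ne (by rw [← hcomap, h, hbot])) hmin
  have hkerφ : RingHom.ker (φ.comp (Ideal.Quotient.mkₐ k P')) = P' := by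
    ext g
    rw [RingHom.mem_ker, AlgHom.comp_apply, map_eq_zero_iff φ hφ]
    exact Ideal.Quotient.eq_zero_iff_mem
  exact ⟨φ.comp (Ideal.Quotient.mkₐ k P'), hPP'.trans_eq hkerφ.symm, hkerφ.trans_lt hP'lt,
    fun g => hφc (Ideal.Quotient.mk P' g)⟩

end FormalArcs

section Derivatives

theorem not_dvd_derivative {k : Type*} [Field k] [CharZero k] {γ : PowerSeries k} (hγ : γ ≠ 0)
    (hconst : PowerSeries.constantCoeff γ = 0) : ¬ γ ∣ PowerSeries.derivative k γ := by
  intro hdvd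
  obtain ⟨d, hd⟩ := ENat.ne_top_iff_exists.1 (PowerSeries.order_eq_top.not.2 hγ)
  obtain ⟨hcoeff, hlt⟩ := PowerSeries.order_eq_nat.1 hd.symm
  have hXd : (PowerSeries.X : PowerSeries k) ^ d ∣ γ := PowerSeries.X_pow_dvd_iff.2 hlt
  rcases d with _ | e
  · exact hcoeff (by rwa [PowerSeries.coeff_zero_eq_constantCoeff_apply])
  · have h := PowerSeries.X_pow_dvd_iff.1 (hXd.trans hdvd) e e.lt_succ_self
    rw [PowerSeries.coeff_derivative] at h
    exact mul_ne_zero hcoeff (Nat.cast_add_one_ne_zero e) h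

theorem derivation_algHom_eq_sum_pderiv {k σ A : Type*} [CommRing k] [Fintype σ] [CommRing A]
    [Algebra k A] (D : Derivation k A A) (φ : MvPolynomial σ k →ₐ[k] A) (g : MvPolynomial σ k) :
    D (φ g) = ∑ j, φ (pderiv j g) * D (φ (X j)) := by
  classical
  induction g using MvPolynomial.induction_on with
  | C a => simp [show φ (C a) = algebraMap k A a from φ.commutes a]
  | add p q hp hq => simp [hp, hq, add_mul, Finset.sum_add_distrib]
  | mul_X p i hp =>
    simp only [map_mul, Derivation.leibniz, pderiv_X, smul_eq_mul, map_add, add_mul, hp,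
      Finset.sum_add_distrib, Finset.mul_sum]
    congr 1
    · simp [Pi.single_apply]
    · exact Finset.sum_congr rfl fun j _ => by ring

end Derivatives

section MovingArc

variable {k σ : Type*} [Field k] [IsAlgClosed k]

/- Translations of the affine space show that all points have the same height. -/
theorem card_le_height_vanishingIdeal_singleton [Finite σ] (p : σ → k) :
    (Nat.card σ : ℕ∞) ≤ (vanishingIdeal k {p}).height := by
  have htranslate : ∀ q : σ → k,
      (vanishingIdeal k {q}).height ≤ (vanishingIdeal k {p}).height := by
    intro q
    let e : MvPolynomial σ k ≃ₐ[k] MvPolynomial σ k :=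
      AlgEquiv.ofAlgHom (aeval fun i => X i + C (p i - q i)) (aeval fun i => X i - C (p i - q i))
        (by ext i; simp) (by ext i; simp)
    have heval : (aeval q : MvPolynomial σ k →ₐ[k] k).comp e.toAlgHom = aeval p := by
      ext i
      simp [e]
    rw [← RingEquiv.height_comap e.toRingEquiv]
    refine le_of_eq (congrArg Ideal.height ?_)
    ext g
    rw [mem_vanishingIdeal_singleton_iff, ← heval, Ideal.mem_comap,
      mem_vanishingIdeal_singleton_iff]
    rfl
  have hdim : ringKrullDim (MvPolynomial σ k) ≤ ((vanishingIdeal k {p}).height : WithBot ℕ∞) := by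
    rw [ringKrullDim_le_iff_isMaximal_height_le]
    intro M hM
    obtain ⟨q, rfl⟩ := MvPolynomial.isMaximal_iff_eq_vanishingIdeal_singleton.1 hM
    exact_mod_cast htranslate q
  rw [MvPolynomial.ringKrullDim_of_isNoetherianRing, ringKrullDim_eq_zero_of_field, zero_add]
    at hdim
  exact_mod_cast hdim

theorem exists_isPrime_lt_vanishingIdeal [Finite σ] {S : Set (MvPolynomial σ k)} (hS : S.Finite)
    (hcard : S.ncard < Nat.card σ) {p : σ → k} (hp : ∀ g ∈ S, eval p g = 0) :
    ∃ P : Ideal (MvPolynomial σ k), P.IsPrime ∧ Ideal.span S ≤ P ∧ P < vanishingIdeal k {p} := by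
  by_contra! hno
  have hle : Ideal.span S ≤ vanishingIdeal k {p} := Ideal.span_le.2 fun g hg =>
    (mem_vanishingIdeal_singleton_iff p g).2 (by rw [aeval_eq_eval]; exact hp g hg)
  have hmin : vanishingIdeal k {p} ∈ (Ideal.span S).minimalPrimes :=
    ⟨⟨inferInstance, hle⟩, fun P hP hPle => not_lt_iff_le_imp_ge.1 (hno P hP.1 hP.2) hPle⟩
  have hheight := (card_le_height_vanishingIdeal_singleton p).trans
    (Ideal.height_le_card_of_mem_minimalPrimes_span hS hmin)
  exact hcard.not_ge (by exact_mod_cast hheight)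

variable [CharZero k] {f : σ → MvPolynomial σ k} {p : σ → k}

/- The curve cut out by the equations other than `f i₀` passes through `p`, and `f i₀` does not
vanish on it since `p` is isolated. -/
theorem exists_algHom_powerSeries_of_mem_minimalPrimes [Finite σ]
    (hmin : vanishingIdeal k {p} ∈ (Ideal.span (Set.range f)).minimalPrimes) (i₀ : σ) :
    ∃ φ : MvPolynomial σ k →ₐ[k] PowerSeries k, (∀ i ≠ i₀, φ (f i) = 0) ∧ φ (f i₀) ≠ 0 ∧
      ∀ g, PowerSeries.constantCoeff (φ g) = eval p g := by
  have hzero : ∀ i, eval p (f i) = 0 := fun i =>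
    (mem_vanishingIdeal_singleton_iff p _).1 (hmin.1.2 (Ideal.subset_span ⟨i, rfl⟩))
  have hcard : (f '' {i₀}ᶜ).ncard < Nat.card σ := by
    refine (Set.ncard_image_le (Set.toFinite _)).trans_lt ?_
    rw [Set.ncard_compl, Set.ncard_singleton]
    have : Nonempty σ := ⟨i₀⟩
    exact Nat.sub_lt Nat.card_pos one_pos
  obtain ⟨P, hP, hSP, hPlt⟩ := exists_isPrime_lt_vanishingIdeal (Set.toFinite _) hcard
    (Set.forall_mem_image.2 fun i _ => hzero i)
  obtain ⟨φ, hPφ, hφlt, hφ⟩ := exists_algHom_powerSeries_of_lt_vanishingIdeal hP hPlt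
  have hφf : ∀ i ≠ i₀, φ (f i) = 0 := fun i hi =>
    hPφ (hSP (Ideal.subset_span (Set.mem_image_of_mem f hi)))
  refine ⟨φ, hφf, fun hφf₀ => ?_, hφ⟩
  have hspan : Ideal.span (Set.range f) ≤ RingHom.ker φ := Ideal.span_le.2 <| by
    rintro _ ⟨i, rfl⟩
    rcases eq_or_ne i i₀ with rfl | hi
    exacts [hφf₀, hφf i hi]
  exact hφlt.not_ge (hmin.2 ⟨RingHom.ker_isPrime φ, hspan⟩ hφlt.le)

theorem exists_forall_mul_sum_pderiv_notMem_span [Fintype σ]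
    (hmin : vanishingIdeal k {p} ∈ (Ideal.span (Set.range f)).minimalPrimes)
    {b : σ → MvPolynomial σ k} {i₀ : σ} (hb : eval p (b i₀) ≠ 0) :
    ∃ j, ∀ u, eval p u ≠ 0 → u * ∑ i, b i * pderiv j (f i) ∉ Ideal.span (Set.range f) := by
  obtain ⟨φ, hφf, hφf₀, hφ⟩ := exists_algHom_powerSeries_of_mem_minimalPrimes hmin i₀
  have hunit : ∀ u, eval p u ≠ 0 → IsUnit (φ u) := fun u hu =>
    PowerSeries.isUnit_iff_constantCoeff.2 (hφ u ▸ isUnit_iff_ne_zero.2 hu)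
  have hspan : Ideal.span (Set.range f) ≤ (Ideal.span {φ (f i₀)}).comap φ := Ideal.span_le.2 <| by
    rintro _ ⟨i, rfl⟩
    rcases eq_or_ne i i₀ with rfl | hi
    · exact Ideal.mem_span_singleton_self _
    · simp [hφf i hi]
  have hdvd : ∀ g ∈ Ideal.span (Set.range f), φ (f i₀) ∣ φ g := fun g hg =>
    Ideal.mem_span_singleton.1 (hspan hg)
  have hφsum : φ (∑ i, b i * f i) = φ (b i₀) * φ (f i₀) := by
    rw [map_sum, Finset.sum_eq_single i₀ (fun i _ hi => by simp [hφf i hi]) (by simp), map_mul]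
  have hpderiv : ∀ j, pderiv j (∑ i, b i * f i) =
      ∑ i, b i * pderiv j (f i) + ∑ i, f i * pderiv j (b i) := by
    simp [Finset.sum_add_distrib]
  have hnot : ¬ φ (f i₀) ∣ PowerSeries.derivative k (φ (b i₀) * φ (f i₀)) := by
    rw [Derivation.leibniz, smul_eq_mul, smul_eq_mul, dvd_add_left (dvd_mul_right _ _),
      (hunit _ hb).dvd_mul_left]
    refine not_dvd_derivative hφf₀ ?_
    rw [hφ]
    exact (mem_vanishingIdeal_singleton_iff p _).1 (hmin.1.2 (Ideal.subset_span ⟨i₀, rfl⟩))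
  by_contra! hall
  refine hnot ?_
  rw [← hφsum, derivation_algHom_eq_sum_pderiv]
  refine Finset.dvd_sum fun j _ => Dvd.dvd.mul_right ?_ _
  obtain ⟨u, hu, hmem⟩ := hall j
  rw [hpderiv, map_add]
  refine dvd_add ?_ (hdvd _ (Ideal.sum_mem _ fun i _ =>
    Ideal.mul_mem_right _ _ (Ideal.subset_span ⟨i, rfl⟩)))
  exact (hunit u hu).dvd_mul_left.1 (map_mul φ u _ ▸ hdvd _ hmem)

end MovingArc

section LocalRing

theorem span_X_sub_C_eq_vanishingIdeal {k σ : Type*} [Field k] (p : σ → k) :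
    Ideal.span (Set.range fun i => X i - C (p i)) = vanishingIdeal k {p} := by
  refine le_antisymm (Ideal.span_le.2 ?_) fun g hg => ?_
  · rintro _ ⟨i, rfl⟩
    simp
  · let I : Ideal (MvPolynomial σ k) := Ideal.span (Set.range fun i => X i - C (p i))
    have hmk : Ideal.Quotient.mkₐ k I = (Algebra.ofId k _).comp (aeval p) := by
      ext i
      rw [AlgHom.comp_apply, aeval_X]
      exact Ideal.Quotient.eq.2 (Ideal.subset_span ⟨i, rfl⟩)
    refine Ideal.Quotient.eq_zero_iff_mem.1 ((DFunLike.congr_fun hmk g).trans ?_)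
    rw [AlgHom.comp_apply, (mem_vanishingIdeal_singleton_iff p g).1 hg, map_zero]

theorem finite_localizationAtPrime_of_mem_minimalPrimes {k R : Type*} [Field k] [CommRing R]
    [Algebra k R] [Algebra.FiniteType k R] (m : Ideal R) [hm : m.IsMaximal]
    (hmin : m ∈ minimalPrimes R) : Module.Finite k (Localization.AtPrime m) := by
  have := Algebra.FiniteType.isNoetherianRing k R
  have := isJacobsonRing_of_finiteType (A := k) (B := R)
  let x : PrimeSpectrum R := ⟨m, hm.isPrime⟩
  have hopen_iff : IsOpen {x} ↔ IsClosed {x} ∧ StableUnderGeneralization {x} :=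
    (PrimeSpectrum.isOpen_singleton_tfae_of_isNoetherian_of_isJacobsonRing x).out 0 2
  have hopen : IsOpen {x} := hopen_iff.2
    ⟨(PrimeSpectrum.isClosed_singleton_iff_isMaximal x).2 hm,
      PrimeSpectrum.stableUnderGeneralization_singleton.2 hmin⟩
  have := Algebra.QuasiFiniteAt.of_isOpen_singleton (R := k) x hopen
  exact Module.Finite.of_quasiFinite

variable {n : ℕ} {H : Set (MvPolynomial (Fin n) ℂ)} {p : Fin n → ℂ}

theorem maxIdealAt_eq_map_vanishingIdeal :
    maxIdealAt H p = (vanishingIdeal ℂ {p}).map (Ideal.Quotient.mk (Ideal.span H)) := by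
  rw [maxIdealAt, span_X_sub_C_eq_vanishingIdeal]

theorem maxIdealAt_isMaximal (hH : Ideal.span H ≤ vanishingIdeal ℂ {p}) :
    (maxIdealAt H p).IsMaximal := by
  rw [maxIdealAt_eq_map_vanishingIdeal]
  exact Ideal.IsMaximal.map_of_surjective_of_ker_le Ideal.Quotient.mk_surjective
    (Ideal.mk_ker.trans_le hH)

theorem maxIdealAt_mem_minimalPrimes
    (hmin : vanishingIdeal ℂ {p} ∈ (Ideal.span H).minimalPrimes) :
    maxIdealAt H p ∈ minimalPrimes (MvPolynomial (Fin n) ℂ ⧸ Ideal.span H) := by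
  change _ ∈ (⊥ : Ideal _).minimalPrimes
  rw [maxIdealAt_eq_map_vanishingIdeal, ← Ideal.map_quotient_self (Ideal.span H),
    Ideal.minimalPrimes_map_of_surjective Ideal.Quotient.mk_surjective, Ideal.mk_ker, sup_idem]
  exact Set.mem_image_of_mem _ hmin

variable (H p) in
/-- The local ring at `p` of the scheme cut out by `H`, whose dimension over `ℂ` is the
multiplicity of `p` as a zero of `H`. -/
abbrev LocalRingAt [(maxIdealAt H p).IsPrime] : Type :=
  Localization.AtPrime (maxIdealAt H p)

variable [(maxIdealAt H p).IsPrime]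

theorem zeroMultiplicity_eq_finrank :
    zeroMultiplicity H p = Module.finrank ℂ (LocalRingAt H p) :=
  dif_pos ‹_›

theorem finite_localRingAt
    (hmin : vanishingIdeal ℂ {p} ∈ (Ideal.span H).minimalPrimes) :
    Module.Finite ℂ (LocalRingAt H p) :=
  have := maxIdealAt_isMaximal hmin.1.2
  finite_localizationAtPrime_of_mem_minimalPrimes _ (maxIdealAt_mem_minimalPrimes hmin)

theorem mk_mem_maxIdealAt_iff {g : MvPolynomial (Fin n) ℂ} :
    Ideal.Quotient.mk (Ideal.span H) g ∈ maxIdealAt H p ↔ eval p g = 0 := by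
  have hle : vanishingIdeal ℂ {p} ≤ (maxIdealAt H p).comap (Ideal.Quotient.mk (Ideal.span H)) :=
    maxIdealAt_eq_map_vanishingIdeal (H := H) (p := p) ▸ Ideal.le_comap_map
  rw [← Ideal.mem_comap, ← Ideal.IsMaximal.eq_of_le inferInstance
    (Ideal.IsPrime.ne_top inferInstance) hle, mem_vanishingIdeal_singleton_iff, aeval_eq_eval]

variable (H p) in
/-- The germ at `p` of a polynomial, as an element of the local ring of `H` at `p`. -/
noncomputable def germ :
    MvPolynomial (Fin n) ℂ →ₐ[ℂ] LocalRingAt H p :=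
  (IsScalarTower.toAlgHom ℂ (MvPolynomial (Fin n) ℂ ⧸ Ideal.span H)
    (LocalRingAt H p)).comp (Ideal.Quotient.mkₐ ℂ (Ideal.span H))

theorem isUnit_germ_iff {u : MvPolynomial (Fin n) ℂ} : IsUnit (germ H p u) ↔ eval p u ≠ 0 :=
  (IsLocalization.AtPrime.isUnit_to_map_iff _ (maxIdealAt H p) _).trans
    (not_congr mk_mem_maxIdealAt_iff)

theorem exists_mul_germ_eq_germ (a : LocalRingAt H p) :
    ∃ g u, eval p u ≠ 0 ∧ a * germ H p u = germ H p g := by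
  obtain ⟨⟨g, u, hu⟩, hgu⟩ := IsLocalization.surj (maxIdealAt H p).primeCompl a
  obtain ⟨g, rfl⟩ := Ideal.Quotient.mk_surjective g
  obtain ⟨u, rfl⟩ := Ideal.Quotient.mk_surjective u
  exact ⟨g, u, mk_mem_maxIdealAt_iff.not.1 hu, hgu⟩

theorem exists_mul_mem_span_of_germ_eq_zero {g : MvPolynomial (Fin n) ℂ}
    (hg : germ H p g = 0) : ∃ u, eval p u ≠ 0 ∧ u * g ∈ Ideal.span H := by
  obtain ⟨⟨u, hu⟩, hug⟩ :=
    (IsLocalization.map_eq_zero_iff (maxIdealAt H p).primeCompl _ _).1 hg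
  obtain ⟨u, rfl⟩ := Ideal.Quotient.mk_surjective u
  exact ⟨u, mk_mem_maxIdealAt_iff.not.1 hu,
    Ideal.Quotient.eq_zero_iff_mem.1 ((map_mul _ u g).trans hug)⟩

theorem germ_eq_zero_of_mem_span {g : MvPolynomial (Fin n) ℂ} (hg : g ∈ Ideal.span H) :
    germ H p g = 0 := by
  rw [germ, AlgHom.comp_apply, Ideal.Quotient.mkₐ_eq_mk,
    Ideal.Quotient.eq_zero_iff_mem.2 hg, map_zero]

theorem exists_algHom_comp_germ_eq {B : Type*} [CommRing B] [Algebra ℂ B]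
    {θ : MvPolynomial (Fin n) ℂ →ₐ[ℂ] B} (hθ : ∀ g ∈ H, θ g = 0)
    (hunit : ∀ u, eval p u ≠ 0 → IsUnit (θ u)) :
    ∃ ψ : LocalRingAt H p →ₐ[ℂ] B, ψ.comp (germ H p) = θ := by
  let θ' : (MvPolynomial (Fin n) ℂ ⧸ Ideal.span H) →ₐ[ℂ] B :=
    Ideal.Quotient.liftₐ (Ideal.span H) θ fun _ hg =>
      (Ideal.span_le.2 hθ : Ideal.span H ≤ RingHom.ker θ) hg
  have hθ' : ∀ y : (maxIdealAt H p).primeCompl, IsUnit (θ' y) := by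
    rintro ⟨u, hu⟩
    obtain ⟨u, rfl⟩ := Ideal.Quotient.mk_surjective u
    exact hunit u (mk_mem_maxIdealAt_iff.not.1 hu)
  exact ⟨IsLocalization.liftAlgHom hθ', AlgHom.ext fun g => IsLocalization.lift_eq _ _⟩

theorem surjective_of_germ_X_mem_range {A : Type*} [Semiring A] [Algebra ℂ A]
    (ψ : A →ₐ[ℂ] LocalRingAt H p) [IsLocalHom ψ]
    (hX : ∀ i, germ H p (X i) ∈ ψ.range) : Function.Surjective ψ := by
  have hrange : (germ H p).range ≤ ψ.range := by
    rw [← Algebra.map_top, ← adjoin_range_X, AlgHom.map_adjoin, Algebra.adjoin_le_iff]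
    rintro _ ⟨_, ⟨i, rfl⟩, rfl⟩
    exact hX i
  intro b
  obtain ⟨g, u, hu, hbu⟩ := exists_mul_germ_eq_germ b
  obtain ⟨c, hc⟩ := hrange ⟨g, rfl⟩
  obtain ⟨d, hd⟩ := hrange ⟨u, rfl⟩
  have hgerm : IsUnit (ψ d) := hd ▸ isUnit_germ_iff.2 hu
  obtain ⟨e, hde⟩ := hgerm.of_map.exists_right_inv
  refine ⟨c * e, ?_⟩
  calc ψ (c * e) = b * ψ (d * e) := by
        rw [map_mul, map_mul, show ψ c = _ from hc, show ψ d = _ from hd, ← mul_assoc]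
        exact congrArg (· * ψ e) hbu.symm
    _ = b := by rw [hde, map_one, mul_one]

end LocalRing

section LinearAlgebra

theorem exists_mul_eq_one_of_rank_eq_card {K m n : Type*} [Field K] [Fintype m] [DecidableEq m]
    [Fintype n] {M : Matrix m n K} (hM : M.rank = Fintype.card m) :
    ∃ N : Matrix n m K, M * N = 1 := by
  rw [← Matrix.mulVec_surjective_iff_exists_right_inverse, ← Matrix.coe_mulVecLin,
    ← LinearMap.range_eq_top]
  exact Submodule.eq_top_of_finrank_eq (hM.trans (Module.finrank_fintype_fun_eq_card K).symm)

theorem exists_mul_eq_smul_one_of_rank_eq_card {K σ m n : Type*} [Field K] [Fintype m]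
    [DecidableEq m] [Fintype n] {M : Matrix m n (MvPolynomial σ K)} {p : σ → K}
    (hM : (M.map (eval p)).rank = Fintype.card m) :
    ∃ (δ : MvPolynomial σ K) (Q : Matrix n m (MvPolynomial σ K)), eval p δ ≠ 0 ∧
      M * Q = δ • 1 := by
  obtain ⟨N, hN⟩ := exists_mul_eq_one_of_rank_eq_card hM
  let N' : Matrix n m (MvPolynomial σ K) := N.map C
  refine ⟨(M * N').det, N' * (M * N').adjugate, ?_, ?_⟩
  · have hN' : N'.map (eval p) = N := Matrix.ext fun i j => eval_C _
    rw [RingHom.map_det, RingHom.mapMatrix_apply, Matrix.map_mul, hN', hN, Matrix.det_one]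
    exact one_ne_zero
  · rw [← Matrix.mul_assoc, Matrix.mul_adjugate]

theorem finrank_lt_finrank_of_surjective_of_not_injective {K A B : Type*} [Field K] [Ring A]
    [Algebra K A] [FiniteDimensional K A] [Ring B] [Algebra K B] {ψ : A →ₐ[K] B}
    (hsurj : Function.Surjective ψ) (hinj : ¬ Function.Injective ψ) :
    Module.finrank K B < Module.finrank K A := by
  have hlin : Function.Surjective ψ.toLinearMap := hsurj
  have := Module.Finite.of_surjective ψ.toLinearMap hlin
  refine (LinearMap.finrank_le_finrank_of_surjective hlin).lt_of_ne fun heq => hinj ?_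
  exact (LinearMap.injective_iff_surjective_of_finrank_eq_finrank heq.symm).2 hlin

end LinearAlgebra

section AugmentedSystem

variable {n s : ℕ} {hs : s < n} {f : Fin n → MvPolynomial (Fin n) ℂ} {p : Fin n → ℂ}
  {a : Fin s → ℂ}

theorem eval_append_embX (g : MvPolynomial (Fin n) ℂ) :
    eval (Fin.append p a) (embX s g) = eval p g := by
  rw [embX, eval_rename]
  congr 2
  funext i
  simp

theorem exists_embX_mul_X_sub_embX_mem_span_hPoly
    (hrank : jacRank (fun i : Fin s => f (Fin.castLE hs.le i)) p = s) :
    ∃ (δ : MvPolynomial (Fin n) ℂ) (w : Fin s → MvPolynomial (Fin n) ℂ), eval p δ ≠ 0 ∧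
      ∀ i, embX s δ * X (Fin.natAdd n i) - embX s (w i) ∈ Ideal.span (Set.range (hPoly hs f)) := by
  let J : Matrix (Fin s) (Fin n) (MvPolynomial (Fin n) ℂ) :=
    Matrix.of fun i j => pderiv j (f (Fin.castLE hs.le i))
  let v : Fin n → MvPolynomial (Fin n) ℂ := fun j => pderiv j (f ⟨s, hs⟩)
  let x : Fin s → MvPolynomial (Fin (n + s)) ℂ := fun i => X (Fin.natAdd n i)
  let ι : MvPolynomial (Fin n) ℂ →+* MvPolynomial (Fin (n + s)) ℂ :=
    (rename (R := ℂ) (Fin.castAdd s)).toRingHom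
  obtain ⟨δ, Q, hδ, hJQ⟩ := exists_mul_eq_smul_one_of_rank_eq_card (M := J) (p := p)
    (hrank.trans (Fintype.card_fin s).symm)
  have hh : hPoly hs f = x ᵥ* J.map ι + ι ∘ v := rfl
  have hcramer : hPoly hs f ᵥ* Q.map ι = ι δ • x + ι ∘ (v ᵥ* Q) := by
    have hJQι : J.map ι * Q.map ι = ι δ • 1 := by
      rw [← Matrix.map_mul, hJQ, Matrix.map_smul' _ _ _ (map_mul ι),
        Matrix.map_one _ (map_zero ι) (map_one ι)]
    rw [hh, Matrix.add_vecMul, Matrix.vecMul_vecMul, hJQι, Matrix.vecMul_smul, Matrix.vecMul_one]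
    exact congrArg _ (funext fun i => (RingHom.map_vecMul ι Q v i).symm)
  refine ⟨δ, -(v ᵥ* Q), hδ, fun i => ?_⟩
  have hi : embX s δ * X (Fin.natAdd n i) - embX s ((-(v ᵥ* Q)) i) =
      ∑ j, hPoly hs f j * ι (Q j i) :=
    calc _ = ι δ * x i + ι ((v ᵥ* Q) i) := (congrArg _ (map_neg ι _)).trans (sub_neg_eq_add _ _)
      _ = _ := (congrFun hcramer i).symm
  rw [hi]
  exact Ideal.sum_mem _ fun j _ => Ideal.mul_mem_right _ _ (Ideal.subset_span ⟨j, rfl⟩)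

theorem exists_embX_sum_mul_pderiv_mem_span_hPoly {δ : MvPolynomial (Fin n) ℂ}
    {w : Fin s → MvPolynomial (Fin n) ℂ} (hw : ∀ i, embX s δ * X (Fin.natAdd n i) - embX s (w i) ∈
      Ideal.span (Set.range (hPoly hs f))) :
    ∃ b : Fin n → MvPolynomial (Fin n) ℂ, b ⟨s, hs⟩ = δ ∧
      ∀ j, embX s (∑ i, b i * pderiv j (f i)) ∈ Ideal.span (Set.range (hPoly hs f)) := by
  have he : Function.Injective (Fin.castLE (Nat.succ_le_of_lt hs)) := Fin.castLE_injective _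
  let b := Function.extend (Fin.castLE (Nat.succ_le_of_lt hs)) (Fin.snoc w δ : Fin (s + 1) → _) 0
  have hb : ∀ k, b (Fin.castLE (Nat.succ_le_of_lt hs) k) = (Fin.snoc w δ : Fin (s + 1) → _) k :=
    fun k => he.extend_apply _ _ k
  have hsum : ∀ j, ∑ i, b i * pderiv j (f i) =
      ∑ k, w k * pderiv j (f (Fin.castLE hs.le k)) + δ * pderiv j (f ⟨s, hs⟩) := by
    intro j
    rw [← Fintype.sum_of_injective _ he
      (fun k => (Fin.snoc w δ : Fin (s + 1) → _) k * pderiv j (f (Fin.castLE hs k))) _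
      (fun i hi => by simp [b, Function.extend_apply' _ _ _ hi]) (fun k => by rw [hb]),
      Fin.sum_univ_castSucc]
    simp only [Fin.snoc_castSucc, Fin.snoc_last]
    rfl
  refine ⟨b, (hb (Fin.last s)).trans (Fin.snoc_last _ _), fun j => ?_⟩
  have hj : embX s (∑ i, b i * pderiv j (f i)) = embX s δ * hPoly hs f j -
      ∑ k, (embX s δ * X (Fin.natAdd n k) - embX s (w k)) *
        embX s (pderiv j (f (Fin.castLE hs.le k))) := by
    rw [hsum]
    simp only [hPoly, embX, map_add, map_sum, map_mul, mul_add, sub_mul, Finset.sum_sub_distrib,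
      Finset.mul_sum, mul_assoc]
    ring
  rw [hj]
  exact sub_mem (Ideal.mul_mem_left _ _ (Ideal.subset_span ⟨j, rfl⟩))
    (Ideal.sum_mem _ fun k _ => Ideal.mul_mem_right _ _ (hw k))

end AugmentedSystem

section Comparison

variable {n s : ℕ} {hs : s < n} {f : Fin n → MvPolynomial (Fin n) ℂ} {p : Fin n → ℂ}
  {a : Fin s → ℂ}

/-- The augmented system `G = {f₁,…,fₙ,h₁,…,hₙ} ⊂ ℂ[x,α]`. -/
def augmentedSystem (hs : s < n) (f : Fin n → MvPolynomial (Fin n) ℂ) :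
    Set (MvPolynomial (Fin (n + s)) ℂ) :=
  (Set.range fun i : Fin n => embX s (f i)) ∪ Set.range (hPoly hs f)

theorem span_hPoly_le_span_augmentedSystem :
    Ideal.span (Set.range (hPoly hs f)) ≤ Ideal.span (augmentedSystem hs f) :=
  Ideal.span_mono Set.subset_union_right

theorem span_augmentedSystem_le_vanishingIdeal
    (hf : ∀ i, eval p (f i) = 0)
    (hh : ∀ j, eval (Fin.append p a) (hPoly hs f j) = 0) :
    Ideal.span (augmentedSystem hs f) ≤ vanishingIdeal ℂ {Fin.append p a} := by
  refine Ideal.span_le.2 ?_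
  rintro _ (⟨i, rfl⟩ | ⟨j, rfl⟩)
  exacts [(mem_vanishingIdeal_singleton_iff _ _).2 ((eval_append_embX _).trans (hf i)),
    (mem_vanishingIdeal_singleton_iff _ _).2 (hh j)]

variable [(maxIdealAt (Set.range f) p).IsPrime]
  [(maxIdealAt (augmentedSystem hs f) (Fin.append p a)).IsPrime]

variable (hs f p a) in
theorem exists_algHom_germ_eq_germ_embX :
    ∃ ψ : LocalRingAt (Set.range f) p →ₐ[ℂ]
        LocalRingAt (augmentedSystem hs f) (Fin.append p a),
      ∀ g, ψ (germ (Set.range f) p g) =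
        germ (augmentedSystem hs f) (Fin.append p a) (embX s g) := by
  let θ : MvPolynomial (Fin n) ℂ →ₐ[ℂ]
      LocalRingAt (augmentedSystem hs f) (Fin.append p a) :=
    (germ (augmentedSystem hs f) (Fin.append p a)).comp (rename (Fin.castAdd s))
  have hzero : ∀ g ∈ Set.range f, θ g = 0 := by
    rintro _ ⟨i, rfl⟩
    exact germ_eq_zero_of_mem_span (Ideal.subset_span (Or.inl ⟨i, rfl⟩))
  have hunit : ∀ u, eval p u ≠ 0 → IsUnit (θ u) := fun u hu =>
    isUnit_germ_iff.2 ((eval_append_embX u).trans_ne hu)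
  obtain ⟨ψ, hψ⟩ := exists_algHom_comp_germ_eq
    (B := LocalRingAt (augmentedSystem hs f) (Fin.append p a)) hzero hunit
  exact ⟨ψ, DFunLike.congr_fun hψ⟩

variable {ψ : LocalRingAt (Set.range f) p →ₐ[ℂ]
    LocalRingAt (augmentedSystem hs f) (Fin.append p a)}

theorem isLocalHom_of_germ_eq_germ_embX
    (hψ : ∀ g, ψ (germ (Set.range f) p g) =
      germ (augmentedSystem hs f) (Fin.append p a) (embX s g)) : IsLocalHom ψ := by
  refine ⟨fun c hc => ?_⟩
  obtain ⟨g, u, hu, hcu⟩ := exists_mul_germ_eq_germ c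
  have hunit : IsUnit (ψ (germ (Set.range f) p g)) := by
    rw [← hcu, map_mul]
    exact hc.mul ((isUnit_germ_iff.2 hu).map ψ)
  rw [hψ, isUnit_germ_iff, eval_append_embX, ← isUnit_germ_iff (H := Set.range f), ← hcu] at hunit
  exact isUnit_of_mul_isUnit_left hunit

theorem surjective_of_germ_eq_germ_embX
    (hrank : jacRank (fun i : Fin s => f (Fin.castLE hs.le i)) p = s)
    (hψ : ∀ g, ψ (germ (Set.range f) p g) =
      germ (augmentedSystem hs f) (Fin.append p a) (embX s g)) : Function.Surjective ψ := by
  have := isLocalHom_of_germ_eq_germ_embX hψ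
  obtain ⟨δ, w, hδ, hw⟩ := exists_embX_mul_X_sub_embX_mem_span_hPoly hrank
  obtain ⟨e, he⟩ := (isUnit_germ_iff (H := Set.range f).2 hδ).exists_left_inv
  refine surjective_of_germ_X_mem_range ψ (Fin.addCases (fun i => ?_) fun i => ?_)
  · exact ⟨germ _ p (X i), (hψ _).trans (by rw [embX, rename_X])⟩
  · have hi := germ_eq_zero_of_mem_span (p := Fin.append p a)
      (span_hPoly_le_span_augmentedSystem (hw i))
    rw [map_sub, map_mul, sub_eq_zero, ← hψ, ← hψ] at hi
    refine ⟨e * germ _ p (w i), ?_⟩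
    change ψ _ = _
    rw [map_mul, ← hi, ← mul_assoc, ← map_mul, he, map_one, one_mul]

theorem not_injective_of_germ_eq_germ_embX
    (hmin : vanishingIdeal ℂ {p} ∈ (Ideal.span (Set.range f)).minimalPrimes)
    (hrank : jacRank (fun i : Fin s => f (Fin.castLE hs.le i)) p = s)
    (hψ : ∀ g, ψ (germ (Set.range f) p g) =
      germ (augmentedSystem hs f) (Fin.append p a) (embX s g)) : ¬ Function.Injective ψ := by
  intro hinj
  obtain ⟨δ, w, hδ, hw⟩ := exists_embX_mul_X_sub_embX_mem_span_hPoly hrank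
  obtain ⟨b, rfl, hb⟩ := exists_embX_sum_mul_pderiv_mem_span_hPoly hw
  obtain ⟨j, hj⟩ := exists_forall_mul_sum_pderiv_notMem_span hmin hδ
  have hgerm : germ (Set.range f) p (∑ i, b i * pderiv j (f i)) = 0 := by
    rw [← map_eq_zero_iff ψ hinj, hψ]
    exact germ_eq_zero_of_mem_span (span_hPoly_le_span_augmentedSystem (hb j))
  obtain ⟨u, hu, hmem⟩ := exists_mul_mem_span_of_germ_eq_zero hgerm
  exact hj u hu hmem

end Comparison

theorem augmented_system_multiplicity_lt_general {n s : ℕ} (hs : s < n)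
    (f : Fin n → MvPolynomial (Fin n) ℂ) (p : Fin n → ℂ)
    (hzero : ∀ i, eval p (f i) = 0)
    (hisolated : ∃ ε > 0, ∀ y : Fin n → ℂ, dist y p < ε → (∀ i, eval y (f i) = 0) → y = p)
    (hranks : jacRank (fun i : Fin s => f (Fin.castLE hs.le i)) p = s)
    (a : Fin s → ℂ)
    (hh : ∀ j, eval (Fin.append p a) (hPoly hs f j) = 0) :
    zeroMultiplicity
        ((Set.range fun i : Fin n => embX s (f i)) ∪ Set.range (hPoly hs f))
        (Fin.append p a) <
      zeroMultiplicity (Set.range f) p := by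
  have hmin : vanishingIdeal ℂ {p} ∈ (Ideal.span (Set.range f)).minimalPrimes :=
    vanishingIdeal_mem_minimalPrimes_of_isolated (Set.forall_mem_range.2 hzero)
      (by simpa only [Set.forall_mem_range] using Metric.eventually_nhds_iff.2 hisolated)
  have hpF := (maxIdealAt_isMaximal hmin.1.2).isPrime
  have hpG := (maxIdealAt_isMaximal (span_augmentedSystem_le_vanishingIdeal hzero hh)).isPrime
  have := finite_localRingAt hmin
  obtain ⟨ψ, hψ⟩ := exists_algHom_germ_eq_germ_embX hs f p a
  have hsurj : Function.Surjective ψ := surjective_of_germ_eq_germ_embX hranks hψ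
  have hinj : ¬ Function.Injective ψ := not_injective_of_germ_eq_germ_embX hmin hranks hψ
  rw [← augmentedSystem, zeroMultiplicity_eq_finrank, zeroMultiplicity_eq_finrank]
  exact finrank_lt_finrank_of_surjective_of_not_injective
    (A := LocalRingAt (Set.range f) p)
    (B := LocalRingAt (augmentedSystem hs f) (Fin.append p a)) hsurj hinj

/-- Let `F = {f₁,…,fₙ} ⊂ ℂ[x₁,…,xₙ]` have an isolated singular zero
`p ∈ ℂⁿ` with `rank J(f₁,…,f_s)(p) = rank J(F)(p) = s`. With new variables
`α = (α₁,…,α_s)` and `h_j = α₁ ∂f₁/∂x_j + ⋯ + α_s ∂f_s/∂x_j + ∂f_{s+1}/∂x_j`, let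
`G = {f₁,…,fₙ,h₁,…,hₙ} ⊂ ℂ[x,α]` and let `α̂` be the unique point with `G(p,α̂) = 0`.
Then the multiplicity of `(p,α̂)` as a zero of `G` is strictly smaller than the
multiplicity of `p` as a zero of `F`. -/
theorem augmented_system_multiplicity_lt {n s : ℕ} (hs : s < n)
    (f : Fin n → MvPolynomial (Fin n) ℂ) (p : Fin n → ℂ)
    (hzero : ∀ i, eval p (f i) = 0)
    (hisolated : ∃ ε > 0, ∀ y : Fin n → ℂ, dist y p < ε → (∀ i, eval y (f i) = 0) → y = p)
    (hsingular : jacRank f p < n)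
    (hranks : jacRank (fun i : Fin s => f (Fin.castLE hs.le i)) p = s)
    (hrank : jacRank f p = s)
    (a : Fin s → ℂ)
    (hG : (∀ i, eval (Fin.append p a) (embX s (f i)) = 0) ∧
      (∀ j, eval (Fin.append p a) (hPoly hs f j) = 0))
    (huniq : ∀ a' : Fin s → ℂ,
      ((∀ i, eval (Fin.append p a') (embX s (f i)) = 0) ∧
        (∀ j, eval (Fin.append p a') (hPoly hs f j) = 0)) → a' = a) :
    zeroMultiplicity
        ((Set.range fun i : Fin n => embX s (f i)) ∪ Set.range (hPoly hs f))
        (Fin.append p a) <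
      zeroMultiplicity (Set.range f) p :=
  augmented_system_multiplicity_lt_general hs f p hzero hisolated hranks a hG.2
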